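/- arXiv:1604.00753 — 2 statements merged into one kernel-verified Lean document; each statement's English description precedes it below -/
import Mathlib

section
/- For every positive integer n, the n-th Fourier sine coefficient of x·log Γ(x) on (0,1) satisfies 2·∫₀¹ x·log Γ(x)·sin(2nπx) dx = (γ + log n − H_n)/(2πn) + 1/(2πn²), where H_n is the n-th harmonic number. -/
open Real

/-!
The substitution `x ↦ 1 - x` and the reflection formula `Γ(x) Γ(1 - x) = π / sin (π x)` express
`2 ∫ x log Γ(x) sin (2nπx)` through `∫ log Γ(x) sin (2nπx)` and `∫ x log (sin (πx)) sin (2nπx)`.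

The latter is integrated by parts: `1 - cos (2nθ)` is `sin θ` times a sum of sines, which cancels
the pole of the cotangent and leaves elementary integrals summing to harmonic numbers.

The former is Kummer's coefficient. In Euler's limit formula for `log Γ`, the integrals of
`log (x + m)` for `m ≤ N` join to a single integral over `[0, N + 1]`, which is a value of the
entire cosine integral `Cin x = ∫₀ˣ (1 - cos t) / t dt`. Rescaling `Cin (Kπ)` to `[0, π / 2]` and
replacing the kernel `1 / s` by `1 / sin s` makes it a finite sum of reciprocals; the difference of
the two kernels is integrable, so Riemann–Lebesgue yields `Cin (Kπ) - log (Kπ) → γ`.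
-/

open Filter Topology MeasureTheory Set intervalIntegral

/-! ### Trigonometric integrals of `log (sin θ)` -/

theorem sin_two_mul_nat_mul_eq_sin_mul_sum (n : ℕ) (θ : ℝ) :
    sin (2 * n * θ) = sin θ * ∑ k ∈ Finset.range n, 2 * cos ((2 * k + 1) * θ) := by
  induction n with
  | zero => simp
  | succ n ih =>
    rw [Finset.sum_range_succ, mul_add, ← ih,
      show 2 * ((n + 1 : ℕ) : ℝ) * θ = (2 * n + 1) * θ + θ by push_cast; ring,
      show 2 * (n : ℝ) * θ = (2 * n + 1) * θ - θ by ring, sin_add, sin_sub]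
    ring

theorem one_sub_cos_two_mul_nat_mul_eq_sin_mul_sum (n : ℕ) (θ : ℝ) :
    1 - cos (2 * n * θ) = sin θ * ∑ k ∈ Finset.range n, 2 * sin ((2 * k + 1) * θ) := by
  induction n with
  | zero => simp
  | succ n ih =>
    rw [Finset.sum_range_succ, mul_add, ← ih,
      show 2 * ((n + 1 : ℕ) : ℝ) * θ = (2 * n + 1) * θ + θ by push_cast; ring,
      show 2 * (n : ℝ) * θ = (2 * n + 1) * θ - θ by ring, cos_add, cos_sub]
    ring

theorem cos_two_mul_nat_mul_pi (n : ℕ) : cos (2 * n * π) = 1 := by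
  rw [mul_right_comm, mul_comm, cos_nat_mul_two_pi]

theorem sin_two_mul_nat_mul_pi (n : ℕ) : sin (2 * n * π) = 0 := by
  exact_mod_cast sin_nat_mul_pi (2 * n)

theorem integral_mul_sin_const_mul (b c : ℝ) :
    ∫ x in 0..b, x * sin (c * x) = sin (c * b) / c ^ 2 - b * cos (c * b) / c := by
  rcases eq_or_ne c 0 with rfl | hc
  · simp
  have hderiv (x : ℝ) : HasDerivAt (fun x ↦ sin (c * x) / c ^ 2 - x * cos (c * x) / c)
      (x * sin (c * x)) x := by
    have hlin : HasDerivAt (fun x ↦ c * x) c x := hasDerivAt_const_mul c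
    convert! (hlin.sin.div_const (c ^ 2)).sub (((hasDerivAt_id x).mul hlin.cos).div_const c) using 1
    simp only [id]
    field_simp
    ring
  rw [integral_eq_sub_of_hasDerivAt (fun x _ ↦ hderiv x)
    (Continuous.intervalIntegrable (by fun_prop) _ _)]
  simp

theorem integral_cos_two_mul_nat_mul (k : ℕ) :
    ∫ θ in 0..π, cos (2 * k * θ) = if k = 0 then π else 0 := by
  split_ifs with hk
  · simp [hk]
  · rw [integral_comp_mul_left cos (by positivity), integral_cos, sin_two_mul_nat_mul_pi]
    simp

theorem integral_cos_mul_sum_cos {n : ℕ} (hn : n ≠ 0) :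
    ∫ θ in 0..π, cos θ * ∑ k ∈ Finset.range n, 2 * cos ((2 * k + 1) * θ) = π := by
  have hterm (k : ℕ) : ∫ θ in 0..π, cos θ * (2 * cos ((2 * k + 1) * θ)) =
      if k = 0 then π else 0 := by
    calc ∫ θ in 0..π, cos θ * (2 * cos ((2 * k + 1) * θ))
        = ∫ θ in 0..π, (cos (2 * k * θ) + cos (2 * (k + 1 : ℕ) * θ)) := by
          congr with θ
          rw [mul_comm, two_mul_cos_mul_cos]
          congr 2 <;> push_cast <;> ring
      _ = if k = 0 then π else 0 := by
          rw [integral_add (Continuous.intervalIntegrable (by fun_prop) _ _)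
            (Continuous.intervalIntegrable (by fun_prop) _ _), integral_cos_two_mul_nat_mul,
            integral_cos_two_mul_nat_mul, if_neg k.succ_ne_zero, add_zero]
  simp_rw [Finset.mul_sum]
  rw [integral_finsetSum fun k _ ↦ Continuous.intervalIntegrable (by fun_prop) _ _,
    Finset.sum_congr rfl fun k _ ↦ hterm k]
  simp [hn]

theorem integral_mul_sin_two_mul_nat_mul (k : ℕ) :
    ∫ θ in 0..π, θ * sin (2 * k * θ) = -(π / 2 * (k : ℝ)⁻¹) := by
  rw [integral_mul_sin_const_mul, sin_two_mul_nat_mul_pi, cos_two_mul_nat_mul_pi]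
  ring

theorem integral_mul_cos_mul_sum_sin (n : ℕ) :
    ∫ θ in 0..π, θ * (cos θ * ∑ k ∈ Finset.range n, 2 * sin ((2 * k + 1) * θ)) =
      -(π / 2 * (2 * harmonic n - 1 / n)) := by
  have hterm (k : ℕ) : ∫ θ in 0..π, θ * (cos θ * (2 * sin ((2 * k + 1) * θ))) =
      -(π / 2 * ((k : ℝ)⁻¹ + ((k + 1 : ℕ) : ℝ)⁻¹)) := by
    calc ∫ θ in 0..π, θ * (cos θ * (2 * sin ((2 * k + 1) * θ)))
        = ∫ θ in 0..π, (θ * sin (2 * k * θ) + θ * sin (2 * (k + 1 : ℕ) * θ)) := by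
          congr with θ
          rw [mul_comm (cos θ), two_mul_sin_mul_cos, mul_add]
          congr 3 <;> push_cast <;> ring
      _ = -(π / 2 * ((k : ℝ)⁻¹ + ((k + 1 : ℕ) : ℝ)⁻¹)) := by
          rw [integral_add (Continuous.intervalIntegrable (by fun_prop) _ _)
            (Continuous.intervalIntegrable (by fun_prop) _ _), integral_mul_sin_two_mul_nat_mul,
            integral_mul_sin_two_mul_nat_mul]
          ring
  simp_rw [Finset.mul_sum]
  rw [integral_finsetSum fun k _ ↦ Continuous.intervalIntegrable (by fun_prop) _ _,
    Finset.sum_congr rfl fun k _ ↦ hterm k]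
  induction n with
  | zero => simp
  | succ n ih =>
    rw [Finset.sum_range_succ, ih, harmonic_succ]
    push_cast
    ring

theorem integral_log_sin_mul_deriv {v v' w : ℝ → ℝ}
    (hv : ∀ θ ∈ Ioo 0 π, HasDerivAt v (v' θ) θ) (hv' : ContinuousOn v' (Icc 0 π))
    (hw : ContinuousOn w (Icc 0 π)) (hvw : ∀ θ ∈ Icc 0 π, v θ = sin θ * w θ) :
    ∫ θ in 0..π, log (sin θ) * v' θ = -∫ θ in 0..π, cos θ * w θ := by
  have hcont : ContinuousOn (fun θ ↦ log (sin θ) * v θ) (Icc 0 π) :=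
    ((Continuous.mul_log continuous_sin).continuousOn.mul hw).congr fun θ hθ ↦ by
      simp only [hvw θ hθ, Pi.mul_apply]
      ring
  have hderiv : ∀ θ ∈ Ioo 0 π, HasDerivAt (fun θ ↦ log (sin θ) * v θ)
      (cos θ * w θ + log (sin θ) * v' θ) θ := fun θ hθ ↦ by
    have hsin : sin θ ≠ 0 := (sin_pos_of_mem_Ioo hθ).ne'
    convert! ((hasDerivAt_sin θ).log hsin).mul (hv θ hθ) using 2
    rw [hvw θ (Ioo_subset_Icc_self hθ)]
    field_simp
  rw [← uIcc_of_le pi_nonneg] at hv' hw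
  have hint₁ : IntervalIntegrable (fun θ ↦ cos θ * w θ) volume 0 π :=
    (continuous_cos.continuousOn.mul hw).intervalIntegrable
  have hint₂ : IntervalIntegrable (fun θ ↦ log (sin θ) * v' θ) volume 0 π :=
    intervalIntegrable_log_sin.mul_continuousOn hv'
  have hFTC := integral_eq_sub_of_hasDerivAt_of_le pi_nonneg hcont hderiv (hint₁.add hint₂)
  rw [integral_add hint₁ hint₂] at hFTC
  simp only [sin_pi, sin_zero, log_zero, zero_mul, sub_zero] at hFTC
  linarith

theorem integral_log_sin_mul_cos {n : ℕ} (hn : n ≠ 0) :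
    ∫ θ in 0..π, log (sin θ) * cos (2 * n * θ) = -(π / (2 * n)) := by
  have hparts := integral_log_sin_mul_deriv (v := fun θ ↦ sin (2 * n * θ))
    (v' := fun θ ↦ 2 * n * cos (2 * n * θ))
    (fun θ _ ↦ by simpa only [mul_comm] using (hasDerivAt_const_mul (2 * (n : ℝ))).sin)
    (by fun_prop) (by fun_prop) fun θ _ ↦ sin_two_mul_nat_mul_eq_sin_mul_sum n θ
  simp_rw [mul_left_comm (log _)] at hparts
  rw [intervalIntegral.integral_const_mul, integral_cos_mul_sum_cos hn] at hparts
  rw [← neg_div, eq_div_iff (by positivity), mul_comm, hparts]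

theorem integral_mul_log_sin_mul_sin {n : ℕ} (hn : n ≠ 0) :
    ∫ θ in 0..π, θ * log (sin θ) * sin (2 * n * θ) =
      π * (log 2 + harmonic n - 1 / n) / (2 * n) := by
  have hparts := integral_log_sin_mul_deriv (v := fun θ ↦ θ * (1 - cos (2 * n * θ)))
    (v' := fun θ ↦ 1 - cos (2 * n * θ) + 2 * n * (θ * sin (2 * n * θ)))
    (fun θ _ ↦ by
      convert! (hasDerivAt_id θ).mul ((hasDerivAt_const_mul (2 * (n : ℝ))).cos.const_sub 1) using 1
      simp only [id]
      ring)
    (by fun_prop) (w := fun θ ↦ θ * ∑ k ∈ Finset.range n, 2 * sin ((2 * k + 1) * θ))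
    (by fun_prop) fun θ _ ↦ by
      rw [one_sub_cos_two_mul_nat_mul_eq_sin_mul_sum, mul_left_comm]
  have hlog : IntervalIntegrable (fun θ ↦ log (sin θ)) volume 0 π := intervalIntegrable_log_sin
  have hlogcos : IntervalIntegrable (fun θ ↦ log (sin θ) * cos (2 * n * θ)) volume 0 π :=
    hlog.mul_continuousOn (by fun_prop)
  have hlogsin : IntervalIntegrable (fun θ ↦ 2 * n * (θ * log (sin θ) * sin (2 * n * θ)))
      volume 0 π :=
    ((hlog.continuousOn_mul (by fun_prop)).mul_continuousOn (by fun_prop)).const_mul _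
  have hexpand : ∫ θ in 0..π, log (sin θ) * (1 - cos (2 * n * θ) + 2 * n * (θ * sin (2 * n * θ))) =
      -log 2 * π - -(π / (2 * n)) + 2 * n * ∫ θ in 0..π, θ * log (sin θ) * sin (2 * n * θ) := by
    rw [← intervalIntegral.integral_const_mul, ← integral_log_sin_zero_pi,
      ← integral_log_sin_mul_cos hn, ← integral_sub hlog hlogcos,
      ← integral_add (hlog.sub hlogcos) hlogsin]
    congr with θ
    ring
  simp_rw [mul_left_comm (cos _)] at hparts
  rw [hexpand, integral_mul_cos_mul_sum_sin] at hparts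
  rw [eq_div_iff (by positivity)]
  linear_combination hparts

/-! ### The Riemann–Lebesgue lemma on an interval -/

theorem tendsto_intervalIntegral_exp_smul_cocompact {E : Type*} [NormedAddCommGroup E]
    [NormedSpace ℂ E] (f : ℝ → E) (a b : ℝ) :
    Tendsto (fun w : ℝ ↦ ∫ s in a..b, Complex.exp (w * s * Complex.I) • f s) (cocompact ℝ)
      (𝓝 0) := by
  have hscale : Tendsto (fun w : ℝ ↦ -(2 * π)⁻¹ * w) (cocompact ℝ) (cocompact ℝ) :=
    tendsto_cocompact_mul_left₀ (neg_ne_zero.2 (inv_ne_zero two_pi_pos.ne'))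
  have hRL := ((Real.tendsto_integral_exp_smul_cocompact (indicator (uIoc a b) f)).comp
    hscale).const_smul (if a ≤ b then (1 : ℝ) else -1)
  rw [smul_zero] at hRL
  refine hRL.congr fun w ↦ ?_
  rw [intervalIntegral_eq_integral_uIoc, Function.comp_apply,
    ← MeasureTheory.integral_indicator measurableSet_uIoc]
  congr 2 with s
  have hchar : (fourierChar (-(s * (-(2 * π)⁻¹ * w))) : ℂ) = Complex.exp (w * s * Complex.I) := by
    rw [fourierChar_apply]
    congr 1
    push_cast
    field_simp
  rw [Circle.smul_def, hchar]
  exact (indicator_smul_apply (uIoc a b) (fun s : ℝ ↦ Complex.exp (w * s * Complex.I)) f s).symm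

theorem tendsto_intervalIntegral_cos_mul_cocompact {f : ℝ → ℝ} {a b : ℝ}
    (hf : IntervalIntegrable f volume a b) :
    Tendsto (fun w : ℝ ↦ ∫ s in a..b, cos (w * s) * f s) (cocompact ℝ) (𝓝 0) := by
  have hRL := (Complex.reCLM.continuous.tendsto _).comp
    (tendsto_intervalIntegral_exp_smul_cocompact (fun s ↦ (f s : ℂ)) a b)
  rw [map_zero] at hRL
  refine hRL.congr fun w ↦ ?_
  have hint : IntervalIntegrable (fun s ↦ Complex.exp (w * s * Complex.I) • (f s : ℂ)) volume a b :=
    IntervalIntegrable.continuousOn_mul ⟨hf.1.ofReal, hf.2.ofReal⟩ (by fun_prop)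
  rw [Function.comp_apply, ← Complex.reCLM.intervalIntegral_comp_comm hint]
  congr with s
  rw [Complex.reCLM_apply, smul_eq_mul, Complex.re_mul_ofReal, ← Complex.ofReal_mul,
    Complex.exp_ofReal_mul_I_re]

/-! ### The entire cosine integral -/

/-- The entire cosine integral `Cin x = ∫₀ˣ (1 - cos t) / t dt`, which describes the sine integrals
of the logarithm. The value `0 / 0 = 0` of the integrand at `t = 0` is its limit there. -/
noncomputable def entireCosIntegral (x : ℝ) : ℝ :=
  ∫ t in 0..x, (1 - cos t) / t

theorem one_sub_cos_div_self (t : ℝ) : (1 - cos t) / t = sinc (t / 2) * sin (t / 2) := by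
  rcases eq_or_ne t 0 with rfl | ht
  · simp
  · rw [sinc_of_ne_zero (by positivity), div_mul_eq_mul_div, ← sq, sin_sq_eq_half_sub,
      mul_div_cancel₀ t two_ne_zero]
    field_simp

theorem continuous_one_sub_cos_div_self : Continuous fun t ↦ (1 - cos t) / t := by
  simp_rw [one_sub_cos_div_self]
  exact (continuous_sinc.comp (continuous_id.div_const 2)).mul (by fun_prop)

theorem one_sub_cos_mul_div (c t : ℝ) :
    (1 - cos (c * t)) / t = c * ((1 - cos (c * t)) / (c * t)) := by
  rcases eq_or_ne c 0 with rfl | hc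
  · simp
  · rw [← mul_div_assoc, mul_div_mul_left _ _ hc]

theorem continuous_one_sub_cos_mul_div (c : ℝ) : Continuous fun t ↦ (1 - cos (c * t)) / t := by
  simp_rw [one_sub_cos_mul_div c]
  exact (continuous_one_sub_cos_div_self.comp (continuous_const_mul c)).const_mul c

theorem integral_one_sub_cos_mul_div (b c : ℝ) :
    ∫ t in 0..b, (1 - cos (c * t)) / t = entireCosIntegral (c * b) := by
  simp_rw [one_sub_cos_mul_div c]
  rw [intervalIntegral.integral_const_mul,
    mul_integral_comp_mul_left (f := fun t ↦ (1 - cos t) / t), mul_zero, entireCosIntegral]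

theorem integral_one_sub_cos_div_sin (K : ℕ) :
    ∫ s in 0..π / 2, (1 - cos (2 * K * s)) / sin s = 2 * harmonic (2 * K) - harmonic K := by
  have hterm (k : ℕ) : ∫ s in 0..π / 2, 2 * sin ((2 * k + 1) * s) = 2 / (2 * k + 1) := by
    rw [intervalIntegral.integral_const_mul, integral_comp_mul_left sin (by positivity),
      integral_sin]
    have hcos : cos ((2 * k + 1) * (π / 2)) = 0 := cos_eq_zero_iff.2 ⟨k, by push_cast; ring⟩
    rw [hcos, mul_zero, cos_zero, sub_zero, smul_eq_mul]
    ring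
  calc ∫ s in 0..π / 2, (1 - cos (2 * K * s)) / sin s
      = ∫ s in 0..π / 2, ∑ k ∈ Finset.range K, 2 * sin ((2 * k + 1) * s) :=
        integral_congr_Ioo_of_le (by positivity) fun s hs ↦ by
          have hsin : sin s ≠ 0 := (sin_pos_of_pos_of_lt_pi hs.1 (by linarith [hs.2, pi_pos])).ne'
          simp only [one_sub_cos_two_mul_nat_mul_eq_sin_mul_sum]
          exact mul_div_cancel_left₀ _ hsin
    _ = ∑ k ∈ Finset.range K, (2 / (2 * k + 1) : ℝ) := by
        rw [integral_finsetSum fun k _ ↦ Continuous.intervalIntegrable (by fun_prop) _ _,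
          Finset.sum_congr rfl fun k _ ↦ hterm k]
    _ = 2 * harmonic (2 * K) - harmonic K := by
        induction K with
        | zero => simp
        | succ K ih =>
          rw [Finset.sum_range_succ, ih, mul_add_one, harmonic_succ, harmonic_succ, harmonic_succ]
          push_cast
          field_simp
          ring

theorem hasDerivAt_log_sinc_half_sub_log_cos_half {s : ℝ} (hs : s ∈ Ioo 0 π) :
    HasDerivAt (fun s ↦ log (sinc (s / 2)) - log (cos (s / 2))) ((sin s)⁻¹ - s⁻¹) s := by
  have hsin : sin (s / 2) ≠ 0 :=
    (sin_pos_of_pos_of_lt_pi (half_pos hs.1) (by linarith [hs.2, pi_pos])).ne'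
  have hcos : cos (s / 2) ≠ 0 :=
    (cos_pos_of_mem_Ioo ⟨by linarith [hs.1, pi_pos], by linarith [hs.2]⟩).ne'
  have hs0 : s ≠ 0 := hs.1.ne'
  have hsinc : HasDerivAt (fun s ↦ sinc (s / 2))
      ((cos (s / 2) * (1 / 2) * (s / 2) - sin (s / 2) * (1 / 2)) / (s / 2) ^ 2) s := by
    refine HasDerivAt.congr_of_eventuallyEq
      ((((hasDerivAt_id s).div_const 2).sin).div ((hasDerivAt_id s).div_const 2) (by simpa)) ?_
    filter_upwards [eventually_ne_nhds hs0] with t ht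
    simp [sinc_of_ne_zero, ht]
  convert! (hsinc.log (by simp [sinc_of_ne_zero, hs0, hsin])).sub
    ((((hasDerivAt_id s).div_const 2).cos).log hcos) using 1
  rw [sinc_of_ne_zero (by simpa), show sin s = 2 * sin (s / 2) * cos (s / 2) by
    rw [← sin_two_mul, mul_div_cancel₀ s two_ne_zero]]
  simp only [id]
  field_simp
  linear_combination -s * sin_sq_add_cos_sq (s / 2)

theorem continuousOn_log_sinc_half_sub_log_cos_half :
    ContinuousOn (fun s ↦ log (sinc (s / 2)) - log (cos (s / 2))) (Ico 0 π) := by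
  have hsinc : ContinuousOn (fun s ↦ log (sinc (s / 2))) (Ico 0 π) := by
    refine (continuous_sinc.comp (continuous_id.div_const 2)).continuousOn.log fun s hs ↦ ?_
    rcases eq_or_ne s 0 with rfl | hs0
    · simp
    · have hspos : 0 < s := hs.1.lt_of_ne' hs0
      have hsin : sin (s / 2) ≠ 0 :=
        (sin_pos_of_pos_of_lt_pi (half_pos hspos) (by linarith [hs.2])).ne'
      simpa [sinc_of_ne_zero, hs0] using hsin
  have hcos : ContinuousOn (fun s ↦ log (cos (s / 2))) (Ico 0 π) :=
    ContinuousOn.log (by fun_prop) fun s hs ↦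
      (cos_pos_of_mem_Ioo ⟨by linarith [hs.1, pi_pos], by linarith [hs.2]⟩).ne'
  exact hsinc.sub hcos

theorem intervalIntegrable_inv_sin_sub_inv {b : ℝ} (hb₀ : 0 ≤ b) (hb : b < π) :
    IntervalIntegrable (fun s ↦ (sin s)⁻¹ - s⁻¹) volume 0 b := by
  refine (intervalIntegrable_iff_integrableOn_Ioc_of_le hb₀).2 (integrableOn_deriv_of_nonneg
    (continuousOn_log_sinc_half_sub_log_cos_half.mono (Icc_subset_Ico_right hb))
    (fun s hs ↦ hasDerivAt_log_sinc_half_sub_log_cos_half ⟨hs.1, hs.2.trans hb⟩) fun s hs ↦ ?_)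
  exact sub_nonneg.2 (inv_anti₀ (sin_pos_of_mem_Ioo ⟨hs.1, hs.2.trans hb⟩) (sin_le hs.1.le))

theorem integral_inv_sin_sub_inv {b : ℝ} (hb₀ : 0 ≤ b) (hb : b < π) :
    ∫ s in 0..b, ((sin s)⁻¹ - s⁻¹) = log (sinc (b / 2)) - log (cos (b / 2)) := by
  rw [integral_eq_sub_of_hasDerivAt_of_le hb₀
    (continuousOn_log_sinc_half_sub_log_cos_half.mono (Icc_subset_Ico_right hb))
    (fun s hs ↦ hasDerivAt_log_sinc_half_sub_log_cos_half ⟨hs.1, hs.2.trans hb⟩)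
    (intervalIntegrable_inv_sin_sub_inv hb₀ hb)]
  simp

theorem entireCosIntegral_pi_mul_nat (K : ℕ) :
    entireCosIntegral (π * K) = 2 * harmonic (2 * K) - harmonic K + log (π / 4) +
      ∫ s in 0..π / 2, cos (2 * K * s) * ((sin s)⁻¹ - s⁻¹) := by
  have hint : IntervalIntegrable (fun s ↦ (sin s)⁻¹ - s⁻¹) volume 0 (π / 2) :=
    intervalIntegrable_inv_sin_sub_inv (by positivity) (half_lt_self pi_pos)
  have hint_cos : IntervalIntegrable (fun s ↦ cos (2 * K * s) * ((sin s)⁻¹ - s⁻¹))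
      volume 0 (π / 2) := hint.continuousOn_mul (by fun_prop)
  have hvalue : ∫ s in 0..π / 2, ((sin s)⁻¹ - s⁻¹) = -log (π / 4) := by
    have hhalf : π / 2 / 2 = π / 4 := by ring
    rw [integral_inv_sin_sub_inv (by positivity) (half_lt_self pi_pos), hhalf,
      sinc_of_ne_zero (by positivity), sin_pi_div_four, cos_pi_div_four,
      log_div (by positivity) (by positivity)]
    ring
  have hsplit : ∫ s in 0..π / 2, (1 - cos (2 * K * s)) / sin s =
      (∫ s in 0..π / 2, (1 - cos (2 * K * s)) / s) + ((∫ s in 0..π / 2, ((sin s)⁻¹ - s⁻¹)) -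
        ∫ s in 0..π / 2, cos (2 * K * s) * ((sin s)⁻¹ - s⁻¹)) := by
    rw [← integral_sub hint hint_cos, ← integral_add
      ((continuous_one_sub_cos_mul_div _).intervalIntegrable _ _) (hint.sub hint_cos)]
    congr with s
    ring
  have harg : 2 * K * (π / 2) = π * K := by ring
  rw [integral_one_sub_cos_div_sin, integral_one_sub_cos_mul_div, hvalue, harg] at hsplit
  linarith

theorem tendsto_entireCosIntegral_pi_mul_nat_sub_log :
    Tendsto (fun K : ℕ ↦ entireCosIntegral (π * K) - log (π * K)) atTop
      (𝓝 eulerMascheroniConstant) := by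
  have hRL : Tendsto (fun K : ℕ ↦ ∫ s in 0..π / 2, cos (2 * K * s) * ((sin s)⁻¹ - s⁻¹))
      atTop (𝓝 0) :=
    (tendsto_intervalIntegral_cos_mul_cocompact
      (intervalIntegrable_inv_sin_sub_inv (by positivity) (half_lt_self pi_pos))).comp
      ((tendsto_natCast_atTop_atTop.const_mul_atTop two_pos).mono_right atTop_le_cocompact)
  have hharmonic := tendsto_harmonic_sub_log
  have hharmonic_two_mul : Tendsto (fun K : ℕ ↦ (harmonic (2 * K) : ℝ) - log (2 * K : ℕ)) atTop
      (𝓝 eulerMascheroniConstant) :=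
    hharmonic.comp (tendsto_id.const_mul_atTop' two_pos)
  have hlim := ((hharmonic_two_mul.const_mul 2).sub hharmonic).add hRL
  rw [add_zero, two_mul, add_sub_cancel_right] at hlim
  refine hlim.congr' ?_
  filter_upwards [eventually_ne_atTop 0] with K hK
  have hlog : log (π / 4) - log (π * K) = -(2 * log (2 * K : ℕ) - log K) := by
    have hfour : log 4 = 2 * log 2 := by
      rw [← log_rpow two_pos]
      norm_num
    rw [log_div pi_ne_zero four_ne_zero, log_mul pi_ne_zero (by positivity), Nat.cast_mul,
      log_mul (by norm_num) (by positivity), hfour]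
    push_cast
    ring
  rw [entireCosIntegral_pi_mul_nat]
  linear_combination -hlog

/-! ### Sine coefficients of the log-Gamma function -/

theorem integral_log_mul_sin_const_mul (b : ℝ) {c : ℝ} (hc : c ≠ 0) :
    ∫ t in 0..b, log t * sin (c * t) =
      (log b * (1 - cos (c * b)) - entireCosIntegral (c * b)) / c := by
  have hcont : Continuous fun t ↦ log t * (1 - cos (c * t)) := by
    have hfactor : (fun t ↦ log t * (1 - cos (c * t))) =
        fun t ↦ t * log t * ((1 - cos (c * t)) / t) := by
      ext t
      rcases eq_or_ne t 0 with rfl | ht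
      · simp
      · field_simp
    rw [hfactor]
    exact continuous_mul_log.mul (continuous_one_sub_cos_mul_div c)
  have hderiv {t : ℝ} (ht : t ≠ 0) : HasDerivAt (fun t ↦ log t * (1 - cos (c * t)))
      ((1 - cos (c * t)) / t + c * (log t * sin (c * t))) t := by
    convert! (hasDerivAt_log ht).mul ((hasDerivAt_const_mul c).cos.const_sub 1) using 1
    ring
  have hint_cos := (continuous_one_sub_cos_mul_div c).intervalIntegrable (μ := volume) 0 b
  have hint_log : IntervalIntegrable (fun t ↦ c * (log t * sin (c * t))) volume 0 b :=
    (intervalIntegrable_log'.mul_continuousOn (by fun_prop)).const_mul c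
  have hFTC := integral_eq_of_hasDerivAt_off_countable _ _ (countable_singleton 0)
    hcont.continuousOn (fun t ht ↦ hderiv ht.2) (hint_cos.add hint_log)
  rw [integral_add hint_cos hint_log, intervalIntegral.integral_const_mul,
    integral_one_sub_cos_mul_div, log_zero, zero_mul, sub_zero] at hFTC
  rw [eq_div_iff hc]
  linear_combination hFTC

theorem log_Gamma_sub_logGammaSeq_mem_Icc {x : ℝ} (hx : x ∈ Ioc 0 1) {N : ℕ} (hN : N ≠ 0) :
    log (Gamma x) - BohrMollerup.logGammaSeq x N ∈ Icc 0 (x * (log (N + 1) - log N)) := by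
  have hfeq {y : ℝ} (hy : 0 < y) : (log ∘ Gamma) (y + 1) = (log ∘ Gamma) y + log y := by
    rw [Function.comp_apply, Gamma_add_one hy.ne', log_mul hy.ne' (Gamma_pos_of_pos hy).ne',
      add_comm, Function.comp_apply]
  have hle := BohrMollerup.le_logGammaSeq convexOn_log_Gamma hfeq hx.1 hx.2 N
  have hge := BohrMollerup.ge_logGammaSeq convexOn_log_Gamma hfeq hx.1 hN
  simp only [Function.comp_apply, Gamma_one, log_one, zero_add] at hle hge
  constructor <;> linarith

theorem abs_logGammaSeq_le {x : ℝ} (hx : x ∈ Ioc 0 1) {N : ℕ} (hN : N ≠ 0) :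
    |BohrMollerup.logGammaSeq x N| ≤ |log (Gamma x)| + log 2 := by
  obtain ⟨hlower, hupper⟩ := log_Gamma_sub_logGammaSeq_mem_Icc hx hN
  have hnonneg : 0 ≤ log (N + 1) - log N :=
    sub_nonneg.2 (log_le_log (by positivity) (by linarith))
  have hgap : log (N + 1) - log N ≤ log 2 := by
    have hN1 : (1 : ℝ) ≤ N := mod_cast Nat.one_le_iff_ne_zero.2 hN
    rw [sub_le_iff_le_add, ← log_mul two_ne_zero (by positivity)]
    exact log_le_log (by positivity) (by linarith)
  calc |BohrMollerup.logGammaSeq x N|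
      ≤ |log (Gamma x)| + |log (Gamma x) - BohrMollerup.logGammaSeq x N| := by
        simpa using abs_sub (log (Gamma x)) (log (Gamma x) - BohrMollerup.logGammaSeq x N)
    _ ≤ |log (Gamma x)| + log 2 := by
        rw [abs_of_nonneg hlower]
        gcongr
        exact hupper.trans ((mul_le_of_le_one_left hnonneg hx.2).trans hgap)

theorem intervalIntegrable_log_Gamma {a b : ℝ} (ha : 0 ≤ a) (hb : 0 ≤ b) :
    IntervalIntegrable (fun x ↦ log (Gamma x)) volume a b := by
  have hpos : ∀ x ∈ uIcc a b, 0 < x + 1 := fun x hx ↦ by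
    linarith [le_min ha hb, hx.1]
  have hshift : IntervalIntegrable (fun x ↦ log (Gamma (x + 1))) volume a b :=
    ContinuousOn.intervalIntegrable <|
      (differentiableOn_Gamma_Ioi.continuousOn.comp (by fun_prop) hpos).log fun x hx ↦
        (Gamma_pos_of_pos (hpos x hx)).ne'
  refine (hshift.sub intervalIntegrable_log').congr fun x hx ↦ ?_
  have hx0 : 0 < x := (le_min ha hb).trans_lt hx.1
  rw [Gamma_add_one hx0.ne', log_mul hx0.ne' (Gamma_pos_of_pos hx0).ne', add_sub_cancel_left]

theorem intervalIntegrable_log_add_const (a b c : ℝ) :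
    IntervalIntegrable (fun x ↦ log (x + c)) volume a b := by
  simpa using (intervalIntegrable_log' (a := a + c) (b := b + c)).comp_add_right c

theorem intervalIntegrable_logGammaSeq (N : ℕ) (a b : ℝ) :
    IntervalIntegrable (fun x ↦ BohrMollerup.logGammaSeq x N) volume a b := by
  unfold BohrMollerup.logGammaSeq
  refine IntervalIntegrable.sub (Continuous.intervalIntegrable (by fun_prop) _ _) ?_
  simpa only [Finset.sum_fn] using IntervalIntegrable.sum (Finset.range (N + 1))
    (f := fun (m : ℕ) x ↦ log (x + m)) fun m _ ↦ intervalIntegrable_log_add_const a b m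

theorem tendsto_integral_logGammaSeq_mul {g : ℝ → ℝ} (hg : ContinuousOn g (Icc 0 1)) :
    Tendsto (fun N : ℕ ↦ ∫ x in 0..1, BohrMollerup.logGammaSeq x N * g x) atTop
      (𝓝 (∫ x in 0..1, log (Gamma x) * g x)) := by
  rw [← uIcc_of_le zero_le_one] at hg
  have hlogGamma : IntervalIntegrable (fun x ↦ log (Gamma x)) volume 0 1 :=
    intervalIntegrable_log_Gamma le_rfl zero_le_one
  refine intervalIntegral.tendsto_integral_filter_of_dominated_convergence
    (fun x ↦ (|log (Gamma x)| + log 2) * |g x|)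
    (Eventually.of_forall fun N ↦ (intervalIntegrable_iff.1
      ((intervalIntegrable_logGammaSeq N 0 1).mul_continuousOn hg)).aestronglyMeasurable)
    ?_ ((hlogGamma.abs.add intervalIntegrable_const).mul_continuousOn hg.abs)
    (ae_of_all _ fun x hx ↦ ?_)
  · filter_upwards [eventually_ne_atTop 0] with N hN
    refine ae_of_all _ fun x hx ↦ ?_
    rw [uIoc_of_le zero_le_one] at hx
    rw [norm_mul, Real.norm_eq_abs, Real.norm_eq_abs]
    exact mul_le_mul_of_nonneg_right (abs_logGammaSeq_le hx hN) (abs_nonneg _)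
  · rw [uIoc_of_le zero_le_one] at hx
    exact (BohrMollerup.tendsto_log_gamma hx.1).mul_const (g x)

theorem sum_integral_log_add_nat_mul_sin {n : ℕ} (hn : n ≠ 0) (M : ℕ) :
    ∑ m ∈ Finset.range M, ∫ x in 0..1, log (x + m) * sin (2 * n * π * x) =
      -entireCosIntegral (π * (2 * n * M : ℕ)) / (2 * n * π) := by
  have hshift (m : ℕ) : ∫ x in 0..1, log (x + m) * sin (2 * n * π * x) =
      ∫ t in (m : ℝ)..(m + 1 : ℕ), log t * sin (2 * n * π * t) := by
    have hperiod (x : ℝ) : sin (2 * n * π * (x + m)) = sin (2 * n * π * x) := by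
      rw [← sin_add_nat_mul_two_pi (2 * n * π * x) (n * m)]
      congr 1
      push_cast
      ring
    have hcomp := integral_comp_add_right (a := 0) (b := 1)
      (fun t ↦ log t * sin (2 * n * π * t)) (m : ℝ)
    simp_rw [hperiod] at hcomp
    rw [hcomp, zero_add, Nat.cast_succ, add_comm]
  have hcos : cos (2 * n * π * M) = 1 := by
    simpa [mul_right_comm _ π, mul_assoc] using cos_two_mul_nat_mul_pi (n * M)
  have harg : 2 * n * π * M = π * (2 * n * M : ℕ) := by
    push_cast
    ring
  calc ∑ m ∈ Finset.range M, ∫ x in 0..1, log (x + m) * sin (2 * n * π * x)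
      = ∫ t in (0 : ℕ)..(M : ℕ), log t * sin (2 * n * π * t) := by
        rw [Finset.sum_congr rfl fun m _ ↦ hshift m]
        exact sum_integral_adjacent_intervals (a := fun m : ℕ ↦ (m : ℝ)) fun m _ ↦
          intervalIntegrable_log'.mul_continuousOn (by fun_prop)
    _ = -entireCosIntegral (π * (2 * n * M : ℕ)) / (2 * n * π) := by
        rw [Nat.cast_zero, integral_log_mul_sin_const_mul _ (by positivity), hcos, harg]
        ring

theorem integral_sin_two_mul_nat_mul_pi_mul (n : ℕ) :
    ∫ x in 0..1, sin (2 * n * π * x) = 0 := by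
  rcases eq_or_ne n 0 with rfl | hn
  · simp
  · rw [integral_comp_mul_left sin (by positivity), integral_sin, mul_one, cos_two_mul_nat_mul_pi]
    simp

theorem integral_mul_sin_two_mul_nat_mul_pi_mul (n : ℕ) :
    ∫ x in 0..1, x * sin (2 * n * π * x) = -(1 / (2 * n * π)) := by
  rw [integral_mul_sin_const_mul, mul_one, sin_two_mul_nat_mul_pi, cos_two_mul_nat_mul_pi]
  ring

theorem integral_logGammaSeq_mul_sin {n : ℕ} (hn : n ≠ 0) (N : ℕ) :
    ∫ x in 0..1, BohrMollerup.logGammaSeq x N * sin (2 * n * π * x) =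
      (entireCosIntegral (π * (2 * n * (N + 1) : ℕ)) - log N) / (2 * n * π) := by
  have hint (m : ℕ) : IntervalIntegrable (fun x ↦ log (x + m) * sin (2 * n * π * x)) volume 0 1 :=
    (intervalIntegrable_log_add_const 0 1 m).mul_continuousOn (by fun_prop)
  have hint_sum : IntervalIntegrable
      (fun x ↦ ∑ m ∈ Finset.range (N + 1), log (x + m) * sin (2 * n * π * x)) volume 0 1 := by
    simpa only [Finset.sum_fn] using IntervalIntegrable.sum _ fun m _ ↦ hint m
  have hexpand (x : ℝ) : BohrMollerup.logGammaSeq x N * sin (2 * n * π * x) =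
      log N * (x * sin (2 * n * π * x)) + log N.factorial * sin (2 * n * π * x) -
        ∑ m ∈ Finset.range (N + 1), log (x + m) * sin (2 * n * π * x) := by
    rw [BohrMollerup.logGammaSeq, ← Finset.sum_mul]
    ring
  simp_rw [hexpand]
  rw [integral_sub (Continuous.intervalIntegrable (by fun_prop) _ _) hint_sum,
    integral_add (Continuous.intervalIntegrable (by fun_prop) _ _)
      (Continuous.intervalIntegrable (by fun_prop) _ _),
    integral_finsetSum fun m _ ↦ hint m, sum_integral_log_add_nat_mul_sin hn,
    intervalIntegral.integral_const_mul, intervalIntegral.integral_const_mul,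
    integral_sin_two_mul_nat_mul_pi_mul, integral_mul_sin_two_mul_nat_mul_pi_mul]
  ring

theorem integral_log_Gamma_mul_sin {n : ℕ} (hn : n ≠ 0) :
    ∫ x in 0..1, log (Gamma x) * sin (2 * n * π * x) =
      (eulerMascheroniConstant + log (2 * n * π)) / (2 * n * π) := by
  refine tendsto_nhds_unique (tendsto_integral_logGammaSeq_mul (by fun_prop)) ?_
  simp_rw [integral_logGammaSeq_mul_sin hn]
  refine Tendsto.div_const ?_ _
  have hindex : Tendsto (fun N : ℕ ↦ 2 * n * (N + 1)) atTop atTop :=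
    (tendsto_add_atTop_nat 1).const_mul_atTop' (by positivity)
  have hlim := ((tendsto_entireCosIntegral_pi_mul_nat_sub_log.comp hindex).add
    tendsto_log_nat_add_one_sub_log).add_const (log (2 * n * π))
  rw [add_zero] at hlim
  refine hlim.congr fun N ↦ ?_
  have hlog : log (π * (2 * n * (N + 1) : ℕ)) = log (2 * n * π) + log (N + 1) := by
    rw [← log_mul (by positivity) (by positivity)]
    push_cast
    ring_nf
  rw [Function.comp_apply, hlog]
  ring

theorem log_Gamma_one_sub {x : ℝ} (hx : sin (π * x) ≠ 0) :
    log (Gamma (1 - x)) = log π - log (sin (π * x)) - log (Gamma x) := by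
  have hprod : Gamma x * Gamma (1 - x) ≠ 0 := by
    rw [Gamma_mul_Gamma_one_sub]
    exact div_ne_zero pi_ne_zero hx
  have hlog := congrArg log (Gamma_mul_Gamma_one_sub x)
  rw [log_mul (left_ne_zero_of_mul hprod) (right_ne_zero_of_mul hprod),
    log_div pi_ne_zero hx] at hlog
  linarith

theorem integral_mul_log_sin_pi_mul_mul_sin {n : ℕ} (hn : n ≠ 0) :
    ∫ x in 0..1, x * log (sin (π * x)) * sin (2 * n * π * x) =
      (log 2 + harmonic n - 1 / n) / (2 * n * π) := by
  have hcomp := mul_integral_comp_mul_left (a := 0) (b := 1) (c := π)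
    (f := fun θ ↦ θ * log (sin θ) * sin (2 * n * θ))
  rw [mul_zero, mul_one, integral_mul_log_sin_mul_sin hn] at hcomp
  have hscale : ∫ x in 0..1, π * x * log (sin (π * x)) * sin (2 * n * (π * x)) =
      π * ∫ x in 0..1, x * log (sin (π * x)) * sin (2 * n * π * x) := by
    simp_rw [mul_assoc]
    exact intervalIntegral.integral_const_mul _ _
  refine mul_left_cancel₀ (pow_ne_zero 2 pi_ne_zero) ?_
  rw [sq, mul_assoc, ← hscale, hcomp]
  field_simp

theorem integral_mul_comp_one_sub_mul_sin {f : ℝ → ℝ} (hf : IntervalIntegrable f volume 0 1)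
    (n : ℕ) :
    ∫ x in 0..1, x * f (1 - x) * sin (2 * n * π * x) =
      (∫ x in 0..1, x * f x * sin (2 * n * π * x)) - ∫ x in 0..1, f x * sin (2 * n * π * x) := by
  have hsin (x : ℝ) : sin (2 * n * π * (1 - x)) = -sin (2 * n * π * x) := by
    rw [← sin_nat_mul_two_pi_sub _ n]
    congr 1
    ring
  have hreflect := integral_comp_sub_left (a := 0) (b := 1)
    (fun x ↦ x * f (1 - x) * sin (2 * n * π * x)) 1
  rw [sub_self, sub_zero] at hreflect
  rw [← hreflect, ← integral_sub
    ((hf.continuousOn_mul (by fun_prop)).mul_continuousOn (by fun_prop))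
    (hf.mul_continuousOn (by fun_prop))]
  congr with x
  rw [sub_sub_cancel, hsin]
  ring

theorem intervalIntegrable_log_sin_pi_mul (a b : ℝ) :
    IntervalIntegrable (fun x ↦ log (sin (π * x))) volume a b := by
  have hlog_sin : IntervalIntegrable (fun θ ↦ log (sin θ)) volume (π * a) (π * b) :=
    intervalIntegrable_log_sin
  simpa using hlog_sin.comp_mul_left (c := π)

theorem integral_mul_log_Gamma_one_sub_mul_sin {n : ℕ} (hn : n ≠ 0) :
    ∫ x in 0..1, x * log (Gamma (1 - x)) * sin (2 * n * π * x) =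
      -(log (2 * π) + harmonic n - 1 / n) / (2 * n * π) -
        ∫ x in 0..1, x * log (Gamma x) * sin (2 * n * π * x) := by
  have hint_sin : IntervalIntegrable (fun x ↦ log π * (x * sin (2 * n * π * x))) volume 0 1 :=
    Continuous.intervalIntegrable (by fun_prop) _ _
  have hint_log_sin : IntervalIntegrable
      (fun x ↦ x * log (sin (π * x)) * sin (2 * n * π * x)) volume 0 1 :=
    ((intervalIntegrable_log_sin_pi_mul 0 1).continuousOn_mul (by fun_prop)).mul_continuousOn
      (by fun_prop)
  have hint_log_Gamma : IntervalIntegrable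
      (fun x ↦ x * log (Gamma x) * sin (2 * n * π * x)) volume 0 1 :=
    ((intervalIntegrable_log_Gamma le_rfl zero_le_one).continuousOn_mul
      (by fun_prop)).mul_continuousOn (by fun_prop)
  calc ∫ x in 0..1, x * log (Gamma (1 - x)) * sin (2 * n * π * x)
      = ∫ x in 0..1, (log π * (x * sin (2 * n * π * x)) -
          x * log (sin (π * x)) * sin (2 * n * π * x) -
          x * log (Gamma x) * sin (2 * n * π * x)) :=
        integral_congr_Ioo_of_le zero_le_one fun x hx ↦ by
          have hsin : 0 < sin (π * x) := sin_pos_of_pos_of_lt_pi (mul_pos pi_pos hx.1)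
            (mul_lt_of_lt_one_right pi_pos hx.2)
          simp only [log_Gamma_one_sub hsin.ne']
          ring
    _ = -(log (2 * π) + harmonic n - 1 / n) / (2 * n * π) -
          ∫ x in 0..1, x * log (Gamma x) * sin (2 * n * π * x) := by
        rw [integral_sub (hint_sin.sub hint_log_sin) hint_log_Gamma,
          integral_sub hint_sin hint_log_sin, intervalIntegral.integral_const_mul,
          integral_mul_sin_two_mul_nat_mul_pi_mul, integral_mul_log_sin_pi_mul_mul_sin hn,
          log_mul two_ne_zero pi_ne_zero]
        ring

/-- For every positive integer `n`, the `n`-th Fourier sine coefficient of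
`x·log Γ(x)` on `(0,1)`:
`2·∫₀¹ x·log Γ(x)·sin(2nπx) dx = (γ + log n − H_n)/(2πn) + 1/(2πn²)`,
where `H_n` is the n-th harmonic number and `γ` is the Euler–Mascheroni constant. -/
theorem fourier_sin_coeff_x_mul_log_Gamma (n : ℕ) (hn : 0 < n) :
    2 * ∫ x in (0:ℝ)..1, x * Real.log (Real.Gamma x) * Real.sin (2 * n * π * x) =
      (Real.eulerMascheroniConstant + Real.log n - (harmonic n : ℝ)) / (2 * π * n)
        + 1 / (2 * π * n ^ 2) := by
  have hreflect := integral_mul_comp_one_sub_mul_sin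
    (intervalIntegrable_log_Gamma le_rfl zero_le_one) n
  rw [integral_mul_log_Gamma_one_sub_mul_sin hn.ne', integral_log_Gamma_mul_sin hn.ne'] at hreflect
  have hlog : log (2 * n * π) = log (2 * π) + log n := by
    rw [mul_right_comm, log_mul two_pi_pos.ne' (by positivity)]
  calc 2 * ∫ x in 0..1, x * log (Gamma x) * sin (2 * n * π * x)
      = (eulerMascheroniConstant + log (2 * n * π)) / (2 * n * π) -
          (log (2 * π) + harmonic n - 1 / n) / (2 * n * π) := by linear_combination -hreflect
    _ = (eulerMascheroniConstant + log n - harmonic n) / (2 * π * n) + 1 / (2 * π * n ^ 2) := by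
        rw [hlog]
        field_simp
        ring
end

section
/- ∫₀¹ x²·log²(sin(πx)/π) dx = 13π²/360 + (1/3)·log²(2π) + (1/π²)·log(2π)·ζ(3). -/
open Real

open MeasureTheory Set Filter Topology
open scoped FourierTransform

/-!
For `0 < x < 1`, `log (1 - e^{2πix}) = log (2 sin πx) + iπ(x - 1/2)`, so up to elementary terms
the first two moments of `log (2 sin πx)` against `x²` are the integrals of the real parts of
`log (1 - e^{2πix})` and of its square. Both functions are boundary values of power series in
`w = e^{2πix}`, and since `∫₀¹ x² cos 2πnx dx = 1 / (2π²n²)`, Abel summation turns these integrals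
into `ζ(3)` and the Euler sum `∑ 1 / (ab(a + b)²)`. That sum is `ζ(4) / 2`: by partial fractions
`2 / (ab(a + b)²) = 1 / (a²b²) - 1 / (a²(a + b)²) - 1 / (b²(a + b)²)`, while `ζ(2)²` splits into
its parts `a < b`, `a > b` and `a = b`.
-/

section AbelSummation

variable {α ι : Type*} [MeasurableSpace α] {μ : Measure α} {c : ι → ℝ} {n : ι → ℕ}
  {Φ : ℂ → ℂ} {g B : α → ℝ} {u : α → Circle} {r : ℝ}

lemma hasSum_re_ofReal_mul_circle
    (hΦ : ∀ w : ℂ, ‖w‖ < 1 → HasSum (fun i => (c i : ℂ) * w ^ n i) (Φ w)) (hr : |r| < 1)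
    (z : Circle) : HasSum (fun i => c i * r ^ n i * ((z : ℂ) ^ n i).re) (Φ (r * z)).re := by
  have h := Complex.hasSum_re (hΦ (r * z) (by simpa [Circle.norm_coe] using hr))
  simpa only [mul_pow, ← mul_assoc, ← Complex.ofReal_pow, ← Complex.ofReal_mul,
    Complex.re_ofReal_mul] using h

lemma abs_re_circle_pow_le_one (z : Circle) (k : ℕ) : |((z : ℂ) ^ k).re| ≤ 1 :=
  (Complex.abs_re_le_norm _).trans (by simp [Circle.norm_coe])

lemma aestronglyMeasurable_re_circle_pow (hu : AEStronglyMeasurable u μ) (k : ℕ) :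
    AEStronglyMeasurable (fun x => ((u x : ℂ) ^ k).re) μ :=
  Continuous.comp_aestronglyMeasurable (g := fun z : Circle => ((z : ℂ) ^ k).re) (by fun_prop) hu

variable [Countable ι]

lemma aestronglyMeasurable_re_ofReal_mul_circle (hu : AEStronglyMeasurable u μ)
    (hΦ : ∀ w : ℂ, ‖w‖ < 1 → HasSum (fun i => (c i : ℂ) * w ^ n i) (Φ w)) (hr : |r| < 1) :
    AEStronglyMeasurable (fun x => (Φ (r * u x)).re) μ :=
  aestronglyMeasurable_of_tendsto_ae (u := atTop)
    (f := fun (s : Finset ι) x => ∑ i ∈ s, c i * r ^ n i * ((u x : ℂ) ^ n i).re)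
    (fun s => Finset.aestronglyMeasurable_fun_sum s fun i _ =>
      (aestronglyMeasurable_re_circle_pow hu (n i)).const_mul _)
    (ae_of_all _ fun x => hasSum_re_ofReal_mul_circle hΦ hr (u x))

theorem hasSum_integral_mul_re_ofReal_mul_circle (hg : Integrable g μ)
    (hu : AEStronglyMeasurable u μ)
    (hΦ : ∀ w : ℂ, ‖w‖ < 1 → HasSum (fun i => (c i : ℂ) * w ^ n i) (Φ w)) (hr : |r| < 1) :
    HasSum (fun i => c i * r ^ n i * ∫ x, g x * ((u x : ℂ) ^ n i).re ∂μ)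
      (∫ x, g x * (Φ (r * u x)).re ∂μ) := by
  have hsum : Summable fun i => ‖c i * r ^ n i‖ := by
    simpa using (hasSum_re_ofReal_mul_circle hΦ hr 1).summable.norm
  simp_rw [← integral_const_mul]
  refine hasSum_integral_of_dominated_convergence (fun i x => ‖c i * r ^ n i‖ * ‖g x‖)
    (fun i => (hg.1.mul (aestronglyMeasurable_re_circle_pow hu _)).const_mul _)
    (fun i => ae_of_all _ fun x => ?_) (ae_of_all _ fun x => hsum.mul_right _) ?_
    (ae_of_all _ fun x => ?_)
  · rw [norm_mul, norm_mul (g x)]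
    gcongr
    exact mul_le_of_le_one_right (norm_nonneg _) (abs_re_circle_pow_le_one _ _)
  · simpa only [tsum_mul_right] using hg.norm.const_mul _
  · simpa only [mul_left_comm] using (hasSum_re_ofReal_mul_circle hΦ hr (u x)).mul_left (g x)

theorem hasSum_integral_mul_re_circle (hg : Integrable g μ) (hu : AEStronglyMeasurable u μ)
    (hΦ : ∀ w : ℂ, ‖w‖ < 1 → HasSum (fun i => (c i : ℂ) * w ^ n i) (Φ w))
    (hcont : ∀ᵐ x ∂μ, ContinuousAt Φ (u x))
    (hbound : ∀ r ∈ Ico (0 : ℝ) 1, ∀ᵐ x ∂μ, ‖Φ (r * u x)‖ ≤ B x)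
    (hB : Integrable (fun x => g x * B x) μ)
    (hsum : Summable fun i => c i * ∫ x, g x * ((u x : ℂ) ^ n i).re ∂μ) :
    HasSum (fun i => c i * ∫ x, g x * ((u x : ℂ) ^ n i).re ∂μ)
      (∫ x, g x * (Φ (u x)).re ∂μ) := by
  have hIco : ∀ᶠ r : ℝ in 𝓝[<] 1, r ∈ Ico (0 : ℝ) 1 := Ico_mem_nhdsLT zero_lt_one
  have habs {r : ℝ} (hr : r ∈ Ico (0 : ℝ) 1) : |r| < 1 := by rw [abs_of_nonneg hr.1]; exact hr.2
  have hid : Tendsto (fun r : ℝ => r) (𝓝[<] 1) (𝓝 1) := nhdsWithin_le_nhds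
  have hintegral : Tendsto (fun r : ℝ => ∫ x, g x * (Φ (r * u x)).re ∂μ) (𝓝[<] 1)
      (𝓝 (∫ x, g x * (Φ (u x)).re ∂μ)) := by
    refine tendsto_integral_filter_of_dominated_convergence (fun x => ‖g x * B x‖) ?_ ?_ hB.norm ?_
    · filter_upwards [hIco] with r hr
      exact hg.1.mul (aestronglyMeasurable_re_ofReal_mul_circle hu hΦ (habs hr))
    · filter_upwards [hIco] with r hr
      filter_upwards [hbound r hr] with x hx
      rw [norm_mul, norm_mul]
      gcongr
      exact (Complex.abs_re_le_norm _).trans (hx.trans (le_abs_self _))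
    · filter_upwards [hcont] with x hx
      have hray : Tendsto (fun r : ℝ => (r : ℂ) * u x) (𝓝[<] 1) (𝓝 (u x)) := by
        simpa using ((Complex.continuous_ofReal.tendsto 1).comp hid).mul_const (u x : ℂ)
      exact ((Complex.continuous_re.tendsto _).comp (hx.tendsto.comp hray)).const_mul _
  have hseries : Tendsto
      (fun r : ℝ => ∑' i, c i * r ^ n i * ∫ x, g x * ((u x : ℂ) ^ n i).re ∂μ) (𝓝[<] 1)
      (𝓝 (∑' i, c i * ∫ x, g x * ((u x : ℂ) ^ n i).re ∂μ)) := by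
    refine tendsto_tsum_of_dominated_convergence hsum.norm (fun i => ?_) ?_
    · simpa using ((hid.pow (n i)).const_mul (c i)).mul_const _
    · filter_upwards [hIco] with r hr i
      rw [mul_right_comm, norm_mul]
      refine mul_le_of_le_one_right (norm_nonneg _) ?_
      rw [norm_pow]
      exact pow_le_one₀ (norm_nonneg _) (habs hr).le
  refine hsum.hasSum_iff.2 (tendsto_nhds_unique (hseries.congr' ?_) hintegral)
  filter_upwards [hIco] with r hr
  exact (hasSum_integral_mul_re_ofReal_mul_circle hg hu hΦ (habs hr)).tsum_eq

end AbelSummation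

section FourierChar

variable {r x : ℝ}

lemma sin_pi_mul_pos (hx : x ∈ Ioo (0 : ℝ) 1) : 0 < sin (π * x) :=
  sin_pos_of_pos_of_lt_pi (mul_pos pi_pos hx.1) (mul_lt_of_lt_one_right pi_pos hx.2)

lemma re_fourierChar_pow (k : ℕ) (x : ℝ) : ((𝐞 x : ℂ) ^ k).re = cos (2 * π * k * x) := by
  rw [fourierChar_apply, ← Complex.exp_nat_mul, ← Complex.exp_ofReal_mul_I_re]
  push_cast
  ring_nf

lemma one_sub_fourierChar (x : ℝ) :
    1 - (𝐞 x : ℂ) = (2 * sin (π * x) : ℝ) * Complex.exp ((π * (x - 1 / 2) : ℝ) * Complex.I) := by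
  rw [fourierChar_apply, show 2 * π * x = 2 * (π * x) by ring,
    show π * (x - 1 / 2) = π * x - π / 2 by ring]
  apply Complex.ext
  · rw [Complex.re_ofReal_mul, Complex.sub_re, Complex.one_re, Complex.exp_ofReal_mul_I_re,
      Complex.exp_ofReal_mul_I_re, cos_sub_pi_div_two, cos_two_mul, cos_sq']
    ring
  · rw [Complex.im_ofReal_mul, Complex.sub_im, Complex.one_im, Complex.exp_ofReal_mul_I_im,
      Complex.exp_ofReal_mul_I_im, sin_sub_pi_div_two, sin_two_mul]
    ring

lemma norm_one_sub_fourierChar (x : ℝ) : ‖1 - (𝐞 x : ℂ)‖ = 2 * |sin (π * x)| := by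
  rw [one_sub_fourierChar, norm_mul, Complex.norm_exp_ofReal_mul_I, mul_one, Complex.norm_real,
    norm_mul, norm_two, norm_eq_abs]

lemma log_one_sub_fourierChar (hx : x ∈ Ioo (0 : ℝ) 1) :
    Complex.log (1 - 𝐞 x) =
      (log (2 * sin (π * x)) : ℂ) + (π * (x - 1 / 2) : ℝ) * Complex.I := by
  have him : (((π * (x - 1 / 2) : ℝ) : ℂ) * Complex.I).im = π * (x - 1 / 2) := by
    rw [Complex.im_ofReal_mul, Complex.I_im, mul_one]
  rw [one_sub_fourierChar, Complex.log_ofReal_mul (mul_pos two_pos (sin_pi_mul_pos hx))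
    (Complex.exp_ne_zero _), Complex.log_exp]
  · rw [him]; nlinarith [pi_pos, hx.1]
  · rw [him]; nlinarith [pi_pos, hx.2]

lemma one_sub_fourierChar_mem_slitPlane (hx : x ∈ Ioo (0 : ℝ) 1) :
    1 - (𝐞 x : ℂ) ∈ Complex.slitPlane := by
  left
  rw [one_sub_fourierChar, Complex.re_ofReal_mul, Complex.exp_ofReal_mul_I_re]
  refine mul_pos (mul_pos two_pos (sin_pi_mul_pos hx)) (cos_pos_of_mem_Ioo ⟨?_, ?_⟩)
  · nlinarith [pi_pos, hx.1]
  · nlinarith [pi_pos, hx.2]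

lemma continuousAt_log_one_sub_fourierChar (hx : x ∈ Ioo (0 : ℝ) 1) :
    ContinuousAt (fun w : ℂ => Complex.log (1 - w)) (𝐞 x) :=
  ContinuousAt.clog (by fun_prop) (one_sub_fourierChar_mem_slitPlane hx)

lemma norm_one_sub_circle_le (z : Circle) (hr : r ∈ Icc (0 : ℝ) 1) :
    ‖1 - (z : ℂ)‖ ≤ 2 * ‖1 - r * (z : ℂ)‖ := by
  have hnorm (t : ℝ) (ht : 0 ≤ t) : ‖(t : ℂ) * z‖ = t := by
    rw [norm_mul, Circle.norm_coe, mul_one, Complex.norm_of_nonneg ht]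
  have hradial : 1 - r ≤ ‖1 - r * (z : ℂ)‖ := by
    simpa only [norm_one, hnorm r hr.1] using norm_sub_norm_le (1 : ℂ) (r * z)
  calc ‖1 - (z : ℂ)‖ = ‖(1 - r * (z : ℂ)) - ((1 - r : ℝ) : ℂ) * z‖ := by
        congr 1; push_cast; ring
    _ ≤ ‖1 - r * (z : ℂ)‖ + (1 - r) :=
        (norm_sub_le _ _).trans_eq (by rw [hnorm _ (sub_nonneg.2 hr.2)])
    _ ≤ 2 * ‖1 - r * (z : ℂ)‖ := by linarith

lemma norm_log_le_abs_log_norm_add_pi (w : ℂ) : ‖Complex.log w‖ ≤ |log ‖w‖| + π := by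
  refine (Complex.norm_le_abs_re_add_abs_im _).trans ?_
  rw [Complex.log_re, Complex.log_im]
  gcongr
  exact Complex.abs_arg_le_pi w

lemma norm_log_one_sub_ofReal_mul_fourierChar_le (hr : r ∈ Icc (0 : ℝ) 1)
    (hx : x ∈ Ioo (0 : ℝ) 1) :
    ‖Complex.log (1 - r * 𝐞 x)‖ ≤ |log (2 * sin (π * x))| + 5 := by
  have hsin := sin_pi_mul_pos hx
  have hlower : 2 * sin (π * x) ≤ 2 * ‖1 - r * (𝐞 x : ℂ)‖ := by
    simpa [norm_one_sub_fourierChar, abs_of_pos hsin] using norm_one_sub_circle_le (𝐞 x) hr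
  have hupper : ‖1 - r * (𝐞 x : ℂ)‖ ≤ 2 := by
    refine (norm_sub_le _ _).trans ?_
    rw [norm_one, norm_mul, Circle.norm_coe, mul_one, Complex.norm_of_nonneg hr.1]
    linarith [hr.2]
  have hpos : 0 < ‖1 - r * (𝐞 x : ℂ)‖ := by linarith
  have hlog_upper := log_le_log hpos hupper
  have hlog_lower : log (2 * sin (π * x)) ≤ log 2 + log ‖1 - r * (𝐞 x : ℂ)‖ := by
    rw [← log_mul two_ne_zero hpos.ne']
    exact log_le_log (by positivity) hlower
  have habs : |log ‖1 - r * (𝐞 x : ℂ)‖| ≤ |log (2 * sin (π * x))| + log 2 := by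
    rw [abs_le]
    constructor
    · linarith [neg_abs_le (log (2 * sin (π * x)))]
    · linarith [abs_nonneg (log (2 * sin (π * x)))]
  linarith [norm_log_le_abs_log_norm_add_pi (1 - r * 𝐞 x), pi_lt_four, log_two_lt_d9]

end FourierChar

section Integrability

lemma intervalIntegrable_log_pow (n : ℕ) :
    IntervalIntegrable (fun x => log x ^ n) volume 0 1 := by
  rcases eq_or_ne n 0 with rfl | hn
  · simp
  have hrpow : IntervalIntegrable (fun x : ℝ => (2 * n) ^ n * x ^ (-(1 / 2) : ℝ)) volume 0 1 :=
    (intervalIntegral.intervalIntegrable_rpow' (by norm_num)).const_mul _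
  refine hrpow.mono_fun' (measurable_log.pow_const n).aestronglyMeasurable ?_
  rw [uIoc_of_le zero_le_one]
  filter_upwards [ae_restrict_mem measurableSet_Ioc] with x ⟨h0, h1⟩
  have hlog := (abs_log_mul_self_rpow_lt x (1 / (2 * n)) h0 h1 (by positivity)).le
  have hroot : (x ^ (1 / (2 * n) : ℝ)) ^ n = x ^ (1 / 2 : ℝ) := by
    rw [← rpow_mul_natCast h0.le]
    congr 1
    field_simp
  rw [rpow_neg h0.le, ← div_eq_mul_inv, le_div_iff₀ (rpow_pos_of_pos h0 _), ← hroot, norm_pow,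
    ← mul_pow]
  refine pow_le_pow_left₀ (by positivity) ?_ n
  rwa [one_div_one_div, abs_mul, abs_of_pos (rpow_pos_of_pos h0 _)] at hlog

lemma abs_log_two_mul_sin_le {x : ℝ} (hx : x ∈ Ioc (0 : ℝ) (1 / 2)) :
    |log (2 * sin (π * x))| ≤ |log x| := by
  obtain ⟨h0, h1⟩ := hx
  have hjordan : 2 * x ≤ sin (π * x) := by
    have h := mul_le_sin (x := π * x) (by positivity) (by nlinarith [pi_pos])
    rwa [← mul_assoc, div_mul_cancel₀ _ pi_ne_zero] at h
  have hlower : log x ≤ log (2 * sin (π * x)) := log_le_log h0 (by linarith)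
  have hupper : log (2 * sin (π * x)) ≤ -log x := by
    rw [← log_inv]
    refine log_le_log (by linarith) ?_
    rw [le_inv_comm₀ (by linarith) h0]
    have h2 : 2 * sin (π * x) ≤ 2 := by linarith [sin_le_one (π * x)]
    calc x ≤ 2⁻¹ := by linarith
      _ ≤ (2 * sin (π * x))⁻¹ := inv_anti₀ (by linarith) h2
  rw [abs_of_nonpos (log_nonpos h0.le (by linarith)), abs_le, neg_neg]
  exact ⟨hlower, hupper⟩

lemma intervalIntegrable_log_two_mul_sin_pow (n : ℕ) :
    IntervalIntegrable (fun x => log (2 * sin (π * x)) ^ n) volume 0 1 := by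
  have hleft : IntervalIntegrable (fun x => log (2 * sin (π * x)) ^ n) volume 0 (1 / 2) := by
    have hlog : IntervalIntegrable (fun x => log x ^ n) volume 0 (1 / 2) :=
      (intervalIntegrable_log_pow n).mono_set (uIcc_subset_uIcc_left (by norm_num))
    refine hlog.mono_fun (Measurable.aestronglyMeasurable (by fun_prop)) ?_
    rw [uIoc_of_le (by norm_num)]
    filter_upwards [ae_restrict_mem measurableSet_Ioc] with x hx
    rw [norm_pow, norm_pow]
    exact pow_le_pow_left₀ (norm_nonneg _) (abs_log_two_mul_sin_le hx) n
  have hsymm (x : ℝ) : sin (π * (1 - x)) = sin (π * x) := by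
    rw [mul_sub, mul_one, sin_pi_sub]
  have hright : IntervalIntegrable (fun x => log (2 * sin (π * x)) ^ n) volume (1 / 2) 1 := by
    simpa only [hsymm, sub_self_div_two, sub_zero] using (hleft.comp_sub_left 1).symm
  exact hleft.trans hright

end Integrability

section WeightSq

lemma integral_sq_mul_cos_two_pi_mul {n : ℕ} (hn : n ≠ 0) :
    ∫ x in (0 : ℝ)..1, x ^ 2 * cos (2 * π * n * x) = 1 / n ^ 2 / (2 * π ^ 2) := by
  have hk : (2 * π * n : ℝ) ≠ 0 := by positivity
  have hcos : cos (2 * π * n) = 1 := by rw [mul_comm, cos_nat_mul_two_pi]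
  have hsin : sin (2 * π * n) = 0 := by
    simpa [mul_comm, mul_left_comm] using sin_nat_mul_pi (2 * n)
  set k : ℝ := 2 * π * n with hk_def
  have hderiv (x : ℝ) : HasDerivAt (fun x => x ^ 2 * sin (k * x) / k
      + 2 * x * cos (k * x) / k ^ 2 - 2 * sin (k * x) / k ^ 3) (x ^ 2 * cos (k * x)) x := by
    have hlin : HasDerivAt (fun x => k * x) k x := by simpa using (hasDerivAt_id x).const_mul k
    refine (((((hasDerivAt_pow 2 x).mul hlin.sin).div_const k).add
      ((((hasDerivAt_id x).const_mul 2).mul hlin.cos).div_const (k ^ 2))).sub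
      ((hlin.sin.const_mul 2).div_const (k ^ 3))).congr_deriv ?_
    simp only [id]
    field_simp
    push_cast
    ring
  rw [intervalIntegral.integral_eq_sub_of_hasDerivAt (fun x _ => hderiv x)
    (Continuous.intervalIntegrable (by fun_prop) _ _)]
  simp only [mul_one, hcos, hsin, mul_zero, sin_zero]
  rw [hk_def]
  field_simp
  ring

theorem hasSum_integral_sq_mul_re_fourierChar {ι : Type*} [Countable ι] {c : ι → ℝ} {n : ι → ℕ}
    {Φ : ℂ → ℂ} {B : ℝ → ℝ} (hn : ∀ i, n i ≠ 0)
    (hΦ : ∀ w : ℂ, ‖w‖ < 1 → HasSum (fun i => (c i : ℂ) * w ^ n i) (Φ w))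
    (hcont : ∀ x ∈ Ioo (0 : ℝ) 1, ContinuousAt Φ (𝐞 x))
    (hbound : ∀ r ∈ Ico (0 : ℝ) 1, ∀ x ∈ Ioo (0 : ℝ) 1, ‖Φ (r * 𝐞 x)‖ ≤ B x)
    (hB : IntervalIntegrable B volume 0 1) (hsum : Summable fun i => c i / n i ^ 2) :
    HasSum (fun i => c i / n i ^ 2)
      (2 * π ^ 2 * ∫ x in (0 : ℝ)..1, x ^ 2 * (Φ (𝐞 x)).re) := by
  have hmoment (i : ι) : c i * ∫ x in Ioo (0 : ℝ) 1, x ^ 2 * ((𝐞 x : ℂ) ^ n i).re =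
      c i / n i ^ 2 / (2 * π ^ 2) := by
    simp_rw [re_fourierChar_pow]
    rw [← integral_Ioc_eq_integral_Ioo, ← intervalIntegral.integral_of_le zero_le_one,
      integral_sq_mul_cos_two_pi_mul (hn i)]
    ring
  have hae {p : ℝ → Prop} (h : ∀ x ∈ Ioo (0 : ℝ) 1, p x) :
      ∀ᵐ x ∂volume.restrict (Ioo (0 : ℝ) 1), p x :=
    ae_restrict_of_forall_mem measurableSet_Ioo h
  have habel := hasSum_integral_mul_re_circle (μ := volume.restrict (Ioo (0 : ℝ) 1))
    (g := fun x => x ^ 2) (u := fun x => 𝐞 x) (c := c) (n := n) ?_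
    continuous_fourierChar.aestronglyMeasurable hΦ (hae hcont)
    (fun r hr => hae (hbound r hr)) ?_ ?_
  · simp only [hmoment] at habel
    rw [← integral_Ioc_eq_integral_Ioo, ← intervalIntegral.integral_of_le zero_le_one] at habel
    refine (habel.mul_left (2 * π ^ 2)).congr_fun fun i => ?_
    field_simp
  · exact (intervalIntegrable_iff_integrableOn_Ioo_of_le zero_le_one).1
      (Continuous.intervalIntegrable (by fun_prop) _ _)
  · exact (intervalIntegrable_iff_integrableOn_Ioo_of_le zero_le_one).1
      (hB.continuousOn_mul (by fun_prop))
  · simpa only [hmoment] using hsum.div_const (2 * π ^ 2)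

end WeightSq

section Series

lemma hasSum_one_div_pnat_pow {k : ℕ} (hk : 1 < k) :
    HasSum (fun n : ℕ+ => 1 / (n : ℝ) ^ k) (riemannZeta k).re := by
  have hzeta : riemannZeta k = (∑' n : ℕ, 1 / (n : ℝ) ^ k : ℝ) := by
    rw [zeta_nat_eq_tsum_of_gt_one hk]
    push_cast
    rfl
  rw [hasSum_pnat_iff (f := fun n : ℕ => 1 / (n : ℝ) ^ k), hzeta, Complex.ofReal_re]
  simpa [(zero_lt_one.trans hk).ne'] using (summable_one_div_nat_pow.2 hk).hasSum

lemma hasSum_neg_log_one_sub {w : ℂ} (hw : ‖w‖ < 1) :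
    HasSum (fun k : ℕ+ => ((1 / k : ℝ) : ℂ) * w ^ (k : ℕ)) (-Complex.log (1 - w)) := by
  rw [hasSum_pnat_iff (f := fun k : ℕ => ((1 / k : ℝ) : ℂ) * w ^ k)]
  simpa [div_eq_inv_mul] using Complex.hasSum_taylorSeries_neg_log hw

lemma hasSum_prod_mul {ι κ R : Type*} [NormedRing R] [NormedAlgebra ℝ R] [FiniteDimensional ℝ R]
    {f : ι → R} {g : κ → R} {s t : R} (hf : HasSum f s) (hg : HasSum g t) :
    HasSum (fun p : ι × κ => f p.1 * g p.2) (s * t) := by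
  have : CompleteSpace R := FiniteDimensional.complete ℝ R
  exact hf.mul hg (summable_mul_of_summable_norm hf.summable.norm hg.summable.norm)

lemma hasSum_log_one_sub_sq {w : ℂ} (hw : ‖w‖ < 1) :
    HasSum (fun p : ℕ+ × ℕ+ =>
      ((1 / ((p.1 : ℝ) * (p.2 : ℝ)) : ℝ) : ℂ) * w ^ ((p.1 : ℕ) + (p.2 : ℕ)))
      (Complex.log (1 - w) ^ 2) := by
  have h := hasSum_neg_log_one_sub hw
  have hmul := hasSum_prod_mul h h
  rw [neg_mul_neg, ← sq] at hmul
  refine hmul.congr_fun fun p => ?_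
  push_cast
  ring

lemma injective_prodMk_self_add : Function.Injective fun p : ℕ+ × ℕ+ => (p.1, p.1 + p.2) := by
  rintro ⟨a, b⟩ ⟨c, d⟩ h
  simp only [Prod.mk.injEq] at h ⊢
  obtain ⟨rfl, h⟩ := h
  exact ⟨rfl, add_left_cancel h⟩

lemma range_prodMk_self_add :
    range (fun p : ℕ+ × ℕ+ => (p.1, p.1 + p.2)) = {p | p.1 < p.2} := by
  ext ⟨a, b⟩
  simp only [mem_range, Prod.exists, Prod.mk.injEq, mem_ofPred_eq]
  constructor
  · rintro ⟨c, d, rfl, rfl⟩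
    exact PNat.lt_add_right c d
  · exact fun h => ⟨a, b - a, rfl, PNat.add_sub_of_lt h⟩

theorem hasSum_pnat_prod_of_lt_of_gt_of_diag {M : Type*} [AddCommMonoid M] [TopologicalSpace M]
    [ContinuousAdd M] {f : ℕ+ × ℕ+ → M} {s t d : M}
    (hlt : HasSum (fun p : ℕ+ × ℕ+ => f (p.1, p.1 + p.2)) s)
    (hgt : HasSum (fun p : ℕ+ × ℕ+ => f (p.1 + p.2, p.1)) t)
    (hdiag : HasSum (fun k => f (k, k)) d) : HasSum f (s + t + d) := by
  have hlt' : HasSum (f ∘ (↑) : {p : ℕ+ × ℕ+ | p.1 < p.2} → M) s := by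
    rw [← range_prodMk_self_add]
    exact injective_prodMk_self_add.hasSum_range_iff.2 hlt
  have hgt' : HasSum (f ∘ (↑) : {p : ℕ+ × ℕ+ | p.2 < p.1} → M) t := by
    have hrange : range (fun p : ℕ+ × ℕ+ => (p.1 + p.2, p.1)) = {p | p.2 < p.1} := by
      change range (Prod.swap ∘ fun p : ℕ+ × ℕ+ => (p.1, p.1 + p.2)) = _
      rw [range_comp, range_prodMk_self_add, image_swap_eq_preimage_swap]
      rfl
    rw [← hrange]
    exact (Prod.swap_injective.comp injective_prodMk_self_add).hasSum_range_iff.2 hgt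
  have hdiag' : HasSum (f ∘ (↑) : {p : ℕ+ × ℕ+ | p.1 = p.2} → M) d := by
    have hrange : range (fun k : ℕ+ => (k, k)) = {p | p.1 = p.2} := by
      ext ⟨a, b⟩
      simp [eq_comm]
    rw [← hrange]
    exact (Function.Injective.hasSum_range_iff fun _ _ h => (Prod.mk.inj h).1).2 hdiag
  refine (hlt'.add_disjoint ?_ hgt').add_isCompl ?_ hdiag'
  · exact disjoint_left.2 fun p (h : p.1 < p.2) h' => h.asymm h'
  · refine ⟨disjoint_left.2 ?_, codisjoint_iff_le_sup.2 fun p _ => ?_⟩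
    · rintro p (h | h) h'
      · exact h.ne h'
      · exact h.ne' h'
    · rcases lt_trichotomy p.1 p.2 with h | h | h
      · exact Or.inl (Or.inl h)
      · exact Or.inr h
      · exact Or.inl (Or.inr h)

theorem hasSum_mul_apply_add {𝕜 : Type*} [RCLike 𝕜] {f : ℕ+ → 𝕜} {s q : 𝕜} (hf : HasSum f s)
    (hsq : HasSum (fun k => f k * f k) q) :
    HasSum (fun p : ℕ+ × ℕ+ => f p.1 * f (p.1 + p.2)) ((s * s - q) / 2) := by
  have hprod := hasSum_prod_mul hf hf
  obtain ⟨t, hlt⟩ : Summable fun p : ℕ+ × ℕ+ => f p.1 * f (p.1 + p.2) :=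
    (hprod.summable.comp_injective injective_prodMk_self_add :)
  have hgt : HasSum (fun p : ℕ+ × ℕ+ => f (p.1 + p.2) * f p.1) t := by
    simpa only [mul_comm] using hlt
  have hsplit : s * s = t + t + q :=
    hprod.unique (hasSum_pnat_prod_of_lt_of_gt_of_diag hlt hgt hsq)
  rwa [hsplit, add_sub_cancel_right, add_self_div_two]

theorem hasSum_one_div_mul_mul_add_sq :
    HasSum (fun p : ℕ+ × ℕ+ =>
      1 / ((p.1 : ℝ) * (p.2 : ℝ)) / (((p.1 : ℕ) + (p.2 : ℕ) : ℕ) : ℝ) ^ 2) (π ^ 4 / 180) := by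
  have hzeta_two : HasSum (fun k : ℕ+ => 1 / (k : ℝ) ^ 2) (π ^ 2 / 6) := by
    rw [hasSum_pnat_iff (f := fun k : ℕ => 1 / (k : ℝ) ^ 2)]
    simpa using hasSum_zeta_two
  have hzeta_four : HasSum (fun k : ℕ+ => 1 / (k : ℝ) ^ 2 * (1 / (k : ℝ) ^ 2)) (π ^ 4 / 90) := by
    rw [hasSum_pnat_iff (f := fun k : ℕ => 1 / (k : ℝ) ^ 2 * (1 / (k : ℝ) ^ 2))]
    simpa [← mul_inv, ← pow_add] using hasSum_zeta_four
  have hprod := hasSum_prod_mul hzeta_two hzeta_two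
  have hleft := hasSum_mul_apply_add hzeta_two hzeta_four
  have hright := (Equiv.prodComm ℕ+ ℕ+).hasSum_iff.2 hleft
  have hpartial (a b : ℕ+) : 1 / ((a : ℝ) * b) / ((a : ℝ) + b) ^ 2 =
      (1 / (a : ℝ) ^ 2 * (1 / (b : ℝ) ^ 2) - 1 / (a : ℝ) ^ 2 * (1 / ((a : ℝ) + b) ^ 2)
        - 1 / (b : ℝ) ^ 2 * (1 / ((b : ℝ) + a) ^ 2)) / 2 := by
    field_simp
    ring
  have hvalue : π ^ 4 / 180 = (π ^ 2 / 6 * (π ^ 2 / 6)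
      - (π ^ 2 / 6 * (π ^ 2 / 6) - π ^ 4 / 90) / 2
      - (π ^ 2 / 6 * (π ^ 2 / 6) - π ^ 4 / 90) / 2) / 2 := by ring
  rw [hvalue]
  refine (((hprod.sub hleft).sub hright).div_const 2).congr_fun fun ⟨a, b⟩ => ?_
  simpa using hpartial a b

end Series

section LogSine

theorem integral_sq_mul_log_two_mul_sin :
    ∫ x in (0 : ℝ)..1, x ^ 2 * log (2 * sin (π * x)) =
      -(riemannZeta 3).re / (2 * π ^ 2) := by
  have hcoeff (k : ℕ+) : 1 / (k : ℝ) / k ^ 2 = 1 / (k : ℝ) ^ 3 := by ring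
  have hzeta : HasSum (fun k : ℕ+ => 1 / (k : ℝ) / k ^ 2) (riemannZeta 3).re := by
    simpa only [hcoeff, Nat.cast_ofNat] using hasSum_one_div_pnat_pow (k := 3) (by norm_num)
  have hbound : IntervalIntegrable (fun x => |log (2 * sin (π * x))| + 5) volume 0 1 := by
    simpa using (intervalIntegrable_log_two_mul_sin_pow 1).abs.add intervalIntegrable_const
  have h := hasSum_integral_sq_mul_re_fourierChar (fun k : ℕ+ => k.ne_zero)
    (fun w => hasSum_neg_log_one_sub) (fun x hx => (continuousAt_log_one_sub_fourierChar hx).neg)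
    (fun r hr x hx => by
      simpa using norm_log_one_sub_ofReal_mul_fourierChar_le (Ico_subset_Icc_self hr) hx)
    hbound hzeta.summable
  have hre : ∫ x in (0 : ℝ)..1, x ^ 2 * (-Complex.log (1 - 𝐞 x)).re =
      -∫ x in (0 : ℝ)..1, x ^ 2 * log (2 * sin (π * x)) := by
    rw [← intervalIntegral.integral_neg]
    refine intervalIntegral.integral_congr_Ioo_of_le zero_le_one fun x hx => ?_
    simp [log_one_sub_fourierChar hx]
  rw [hre] at h
  rw [eq_div_iff (by positivity), ← h.unique hzeta]
  ring

lemma integral_sq_mul_pi_mul_sub_half_sq :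
    ∫ x in (0 : ℝ)..1, x ^ 2 * (π * (x - 1 / 2)) ^ 2 = π ^ 2 / 30 := by
  have hexpand (x : ℝ) :
      x ^ 2 * (π * (x - 1 / 2)) ^ 2 = π ^ 2 * (x ^ 4 - x ^ 3 + 1 / 4 * x ^ 2) := by
    ring
  simp_rw [hexpand]
  rw [intervalIntegral.integral_const_mul, intervalIntegral.integral_add,
    intervalIntegral.integral_sub, intervalIntegral.integral_const_mul]
  · simp only [integral_pow]
    norm_num
    ring
  all_goals exact Continuous.intervalIntegrable (by fun_prop) _ _

theorem integral_sq_mul_log_two_mul_sin_sq :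
    ∫ x in (0 : ℝ)..1, x ^ 2 * log (2 * sin (π * x)) ^ 2 = 13 * π ^ 2 / 360 := by
  have hbound : IntervalIntegrable (fun x => (|log (2 * sin (π * x))| + 5) ^ 2) volume 0 1 := by
    have h1 := (intervalIntegrable_log_two_mul_sin_pow 1).abs.const_mul 10
    convert ((intervalIntegrable_log_two_mul_sin_pow 2).add h1).add
      (intervalIntegrable_const (c := 25)) using 2 with x
    simp only [pow_one, ← sq_abs (log (2 * sin (π * x)))]
    ring
  have h := hasSum_integral_sq_mul_re_fourierChar (fun p : ℕ+ × ℕ+ => by positivity)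
    (fun w => hasSum_log_one_sub_sq) (fun x hx => (continuousAt_log_one_sub_fourierChar hx).pow 2)
    (fun r hr x hx => by
      rw [norm_pow]
      exact pow_le_pow_left₀ (norm_nonneg _)
        (norm_log_one_sub_ofReal_mul_fourierChar_le (Ico_subset_Icc_self hr) hx) 2)
    hbound hasSum_one_div_mul_mul_add_sq.summable
  have hre_sq (s t : ℝ) : (((s : ℂ) + t * Complex.I) ^ 2).re = s ^ 2 - t ^ 2 := by simp [sq]
  have hre : ∫ x in (0 : ℝ)..1, x ^ 2 * (Complex.log (1 - 𝐞 x) ^ 2).re =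
      (∫ x in (0 : ℝ)..1, x ^ 2 * log (2 * sin (π * x)) ^ 2) - π ^ 2 / 30 := by
    rw [← integral_sq_mul_pi_mul_sub_half_sq, ← intervalIntegral.integral_sub
      ((intervalIntegrable_log_two_mul_sin_pow 2).continuousOn_mul (by fun_prop))
      (Continuous.intervalIntegrable (by fun_prop) _ _)]
    refine intervalIntegral.integral_congr_Ioo_of_le zero_le_one fun x hx => ?_
    simp only [log_one_sub_fourierChar hx, hre_sq, mul_sub]
  have hvalue := h.unique hasSum_one_div_mul_mul_add_sq
  rw [hre] at hvalue
  refine mul_left_cancel₀ (pow_ne_zero 2 pi_ne_zero) ?_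
  linarith

lemma log_sin_div_pi {x : ℝ} (hx : x ∈ Ioo (0 : ℝ) 1) :
    log (sin (π * x) / π) = log (2 * sin (π * x)) - log (2 * π) := by
  have := sin_pi_mul_pos hx
  rw [← log_div (by positivity) (by positivity), mul_div_mul_left _ _ two_ne_zero]

end LogSine

/-- `∫₀¹ x²·log²(sin(πx)/π) dx = 13π²/360 + (1/3)·log²(2π) + (1/π²)·log(2π)·ζ(3)`. -/
theorem integral_xsq_logsq_sin_div_pi :
    ∫ x in (0:ℝ)..1, x ^ 2 * Real.log (Real.sin (π * x) / π) ^ 2 =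
      13 * π ^ 2 / 360 + (1 / 3) * Real.log (2 * π) ^ 2
        + (1 / π ^ 2) * Real.log (2 * π) * (riemannZeta 3).re := by
  have hexpand : EqOn (fun x => x ^ 2 * log (sin (π * x) / π) ^ 2)
      (fun x => x ^ 2 * log (2 * sin (π * x)) ^ 2
        - 2 * log (2 * π) * (x ^ 2 * log (2 * sin (π * x))) + log (2 * π) ^ 2 * x ^ 2)
      (Ioo 0 1) := fun x hx => by
    simp only [log_sin_div_pi hx]
    ring
  have hint (n : ℕ) : IntervalIntegrable (fun x => x ^ 2 * log (2 * sin (π * x)) ^ n) volume 0 1 :=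
    (intervalIntegrable_log_two_mul_sin_pow n).continuousOn_mul (by fun_prop)
  have hint_one : IntervalIntegrable
      (fun x => 2 * log (2 * π) * (x ^ 2 * log (2 * sin (π * x)))) volume 0 1 := by
    simpa using (hint 1).const_mul (2 * log (2 * π))
  rw [intervalIntegral.integral_congr_Ioo_of_le zero_le_one hexpand,
    intervalIntegral.integral_add ((hint 2).sub hint_one)
      (Continuous.intervalIntegrable (by fun_prop) _ _),
    intervalIntegral.integral_sub (hint 2) hint_one, intervalIntegral.integral_const_mul,
    intervalIntegral.integral_const_mul, integral_sq_mul_log_two_mul_sin_sq,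
    integral_sq_mul_log_two_mul_sin, integral_pow]
  ring
end
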